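/- Let h : ℝ → ℝ be Borel measurable and square-integrable with respect to Lebesgue measure, and define ρ(x) := ∫_ℝ h(y−x)h(y) dy. Let μ be a finite Borel measure on ℝ and let ψ : ℝ → ℝ be bounded and Borel measurable. Then z ↦ (∫_ℝ h(z−x)ψ(x) μ(dx))² is integrable over ℝ and ∫_ℝ (∫_ℝ h(z−x)ψ(x) μ(dx))² dz = ∫_ℝ ∫_ℝ ρ(x−y) ψ(x) ψ(y) μ(dx) μ(dy). -/

import Mathlib

open MeasureTheory Filter Topology

/-- for a Borel, square-integrable `h : ℝ → ℝ` with covariance kernel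
`ρ(x) = ∫ h(y−x) h(y) dy`, a finite Borel measure `μ` on `ℝ` and a bounded Borel `ψ`,
the function `z ↦ (∫ h(z−x) ψ(x) μ(dx))²` is integrable on `ℝ` and
`∫ (∫ h(z−x) ψ(x) μ(dx))² dz = ∫∫ ρ(x−y) ψ(x) ψ(y) μ(dx) μ(dy)`. -/
theorem statement8 (h : ℝ → ℝ) (hhm : Measurable h) (hh2 : MemLp h 2 volume)
    (ρ : ℝ → ℝ) (hρ : ∀ x, ρ x = ∫ y, h (y - x) * h y)
    (μ : Measure ℝ) [IsFiniteMeasure μ]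
    (ψ : ℝ → ℝ) (hψm : Measurable ψ) (C : ℝ) (hψb : ∀ x, |ψ x| ≤ C) :
    Integrable (fun z => (∫ x, h (z - x) * ψ x ∂μ) ^ 2) volume ∧
    ∫ z, (∫ x, h (z - x) * ψ x ∂μ) ^ 2 = ∫ x, ∫ y, ρ (x - y) * ψ x * ψ y ∂μ ∂μ := by
  have hint : Integrable (fun z => h z ^ 2) volume := hh2.integrable_sq
  have hint' : ∀ x, Integrable (fun z => h (z - x) ^ 2) volume := fun x =>
    hint.comp_sub_right x
  have hC : 0 ≤ C := (abs_nonneg _).trans (hψb 0)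
  have hbd : ∀ x y z, ‖(h (z - x) * ψ x) * (h (z - y) * ψ y)‖ ≤
      C ^ 2 * (h (z - x) ^ 2 + h (z - y) ^ 2) := by
    intro x y z
    have h1 : ‖(h (z - x) * ψ x) * (h (z - y) * ψ y)‖
        = (|ψ x| * |ψ y|) * (|h (z - x)| * |h (z - y)|) := by
      simp only [norm_mul, Real.norm_eq_abs]; ring
    have h2 : |ψ x| * |ψ y| ≤ C ^ 2 := by
      rw [sq]; exact mul_le_mul (hψb x) (hψb y) (abs_nonneg _) hC
    have h3 : |h (z - x)| * |h (z - y)| ≤ h (z - x) ^ 2 + h (z - y) ^ 2 := by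
      rw [← sq_abs (h (z - x)), ← sq_abs (h (z - y))]
      nlinarith [sq_nonneg (|h (z - x)| - |h (z - y)|), sq_nonneg (|h (z - x)|),
        sq_nonneg (|h (z - y)|)]
    rw [h1]
    exact mul_le_mul h2 h3 (by positivity) (by positivity)
  have hbi : ∀ x y, Integrable (fun z => C ^ 2 * (h (z - x) ^ 2 + h (z - y) ^ 2)) volume :=
    fun x y => ((hint' x).add (hint' y)).const_mul _
  have hbv : ∀ x y, ∫ z, C ^ 2 * (h (z - x) ^ 2 + h (z - y) ^ 2) =
      C ^ 2 * ((∫ z, h z ^ 2) + ∫ z, h z ^ 2) := by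
    intro x y
    rw [integral_const_mul, integral_add (hint' x) (hint' y),
      integral_sub_right_eq_self (fun z => h z ^ 2) x,
      integral_sub_right_eq_self (fun z => h z ^ 2) y]
  let G : ℝ × ℝ → ℝ → ℝ := fun p z => (h (z - p.1) * ψ p.1) * (h (z - p.2) * ψ p.2)
  have hGm : Measurable (Function.uncurry G) := by
    simp only [G, Function.uncurry_def]
    fun_prop
  have hGx : ∀ p, Integrable (G p) volume := fun p =>
    (hbi p.1 p.2).mono' (hGm.comp measurable_prodMk_left).aestronglyMeasurable
      (Eventually.of_forall fun z => hbd p.1 p.2 z)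
  have hG : Integrable (Function.uncurry G) ((μ.prod μ).prod volume) := by
    rw [integrable_prod_iff hGm.aestronglyMeasurable]
    refine ⟨Eventually.of_forall hGx, ?_⟩
    refine Integrable.of_bound (C := C ^ 2 * ((∫ z, h z ^ 2) + ∫ z, h z ^ 2))
      (hGm.aestronglyMeasurable.norm.integral_prod_right') (Eventually.of_forall fun p => ?_)
    rw [Real.norm_of_nonneg (integral_nonneg fun z => norm_nonneg _), ← hbv p.1 p.2]
    exact integral_mono (hGx p).norm (hbi p.1 p.2) fun z => hbd p.1 p.2 z
  have hsq : ∀ z, (∫ x, h (z - x) * ψ x ∂μ) ^ 2 = ∫ p, G p z ∂(μ.prod μ) := by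
    intro z
    rw [sq]
    exact (integral_prod_mul (fun x => h (z - x) * ψ x) (fun x => h (z - x) * ψ x)).symm
  have hGρ : ∀ p : ℝ × ℝ, ∫ z, G p z = ρ (p.1 - p.2) * ψ p.1 * ψ p.2 := by
    rintro ⟨x, y⟩
    rw [hρ, ← integral_sub_right_eq_self (fun w => h (w - (x - y)) * h w) y, mul_assoc,
      ← integral_mul_const]
    refine integral_congr_ae (Eventually.of_forall fun z => ?_)
    simp only [G, sub_sub_sub_cancel_right, show z - y - (x - y) = z - x by ring]
    ring
  refine ⟨?_, ?_⟩
  · simp only [hsq]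
    exact hG.integral_prod_right
  · simp only [hsq]
    rw [← integral_integral_swap hG]
    have hR := hG.integral_prod_left
    simp only [Function.uncurry_apply_pair, hGρ] at hR ⊢
    exact integral_prod _ hR
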